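/- For every z ∈ ℝ the rank of 𝒜(z) equals min{μ,r}·min{ν,q} (in particular the rank is independent of z). If μ = r and ν = q, then 𝒜(z) is a square qr×qr matrix that is invertible for every z, with det 𝒜(z) = (−1)^{qr(q−1)(r−1)/4}. -/

import Mathlib

open Matrix Kronecker

noncomputable section

/-- The `k × k` shift matrix with `(i,j)` entry `δ_{i+1,j}`. -/
def Sh (k : ℕ) : Matrix (Fin k) (Fin k) ℝ :=
  Matrix.of fun i j => if (i : ℕ) + 1 = (j : ℕ) then 1 else 0

/-- The matrix `A^k(z) ∈ ℝ^{q×r}`, with entries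
`k!/(i!·j!·(k−i−j)!)·z^{k−i−j} = C(k,i)·C(k−i,j)·z^{k−i−j}` for `i+j ≤ k`, else `0`. -/
def Amat (q r k : ℕ) (z : ℝ) : Matrix (Fin q) (Fin r) ℝ :=
  Matrix.of fun i j =>
    if (i : ℕ) + (j : ℕ) ≤ k then
      (Nat.choose k i : ℝ) * (Nat.choose (k - i) j : ℝ) * z ^ (k - i - j)
    else 0

/-- The block matrix `𝒜(z) ∈ ℝ^{μq×νr}` with `(i,j)` block `A^{i+j}(z)`. -/
def Acal (q r μ ν : ℕ) (z : ℝ) : Matrix (Fin μ × Fin q) (Fin ν × Fin r) ℝ :=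
  Matrix.of fun p p' => Amat q r ((p.1 : ℕ) + (p'.1 : ℕ)) z p.2 p'.2

/-- `A^0 = e₀ f₀ᵀ ∈ ℝ^{q×r}`. -/
def A0 (q r : ℕ) : Matrix (Fin q) (Fin r) ℝ :=
  Matrix.of fun a b => if (a : ℕ) = 0 ∧ (b : ℕ) = 0 then 1 else 0

/-- The block matrix `Ā ∈ ℝ^{μq×νr}` with `(i,j)` block `(S_qᵀ)^j · A^0 · S_r^i`. -/
def Abar (q r μ ν : ℕ) : Matrix (Fin μ × Fin q) (Fin ν × Fin r) ℝ :=
  Matrix.of fun p p' =>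
    (((Sh q)ᵀ) ^ (p'.1 : ℕ) * A0 q r * (Sh r) ^ (p.1 : ℕ)) p.2 p'.2

/-- `J_k(z) = z·I_k + S_kᵀ`. -/
def Jmat (k : ℕ) (z : ℝ) : Matrix (Fin k) (Fin k) ℝ := z • 1 + (Sh k)ᵀ

/-- The block lower-triangular matrix `𝓛_{m,k}(z)` with `(i,j)` block `C(i,j)·J_k(z)^{i−j}`
for `i ≥ j` and `0` otherwise. -/
def Lmat (m k : ℕ) (z : ℝ) : Matrix (Fin m × Fin k) (Fin m × Fin k) ℝ :=
  Matrix.of fun p p' =>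
    if (p'.1 : ℕ) ≤ (p.1 : ℕ) then
      (Nat.choose p.1 p'.1 : ℝ) * ((Jmat k z) ^ ((p.1 : ℕ) - (p'.1 : ℕ))) p.2 p'.2
    else 0

/-- Natural (block row-major) identification of `Fin (m*n)` with `Fin m × Fin n`. -/
def bIdx (m n : ℕ) : Fin (m * n) → Fin m × Fin n := fun x => finProdFinEquiv.symm x

/-- `M^{(n)}(z) ∈ ℝ^{q×r}`, the `n`-th derivative of `M(z) = u(z)w(z)`,
whose `(a,b)` entry is the `n`-th derivative of `z^{a+b}`. -/
def Md (q r n : ℕ) (z : ℝ) : Matrix (Fin q) (Fin r) ℝ :=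
  Matrix.of fun a b => iteratedDeriv n (fun t : ℝ => t ^ ((a : ℕ) + (b : ℕ))) z

/-- The block matrix `𝓜(z) ∈ ℝ^{μq×νr}` with `(i,j)` block `M^{(i+j)}(z)`. -/
def Mcal (q r μ ν : ℕ) (z : ℝ) : Matrix (Fin μ × Fin q) (Fin ν × Fin r) ℝ :=
  Matrix.of fun p p' => Md q r ((p.1 : ℕ) + (p'.1 : ℕ)) z p.2 p'.2

/-- The block matrix `𝓝(z) ∈ ℝ^{μq×νr}` with `(i,j)` block `M^{(i+j)}(z)/(i!·j!)`. -/
def Ncal (q r μ ν : ℕ) (z : ℝ) : Matrix (Fin μ × Fin q) (Fin ν × Fin r) ℝ :=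
  Matrix.of fun p p' =>
    Md q r ((p.1 : ℕ) + (p'.1 : ℕ)) z p.2 p'.2 /
      ((Nat.factorial (p.1 : ℕ) : ℝ) * (Nat.factorial (p'.1 : ℕ) : ℝ))

/-- `𝓝^0(z) = (M(z)/0!, …, M^{(ν−1)}(z)/(ν−1)!) ∈ ℝ^{q×νr}`. -/
def Ncal0 (q r ν : ℕ) (z : ℝ) : Matrix (Fin q) (Fin ν × Fin r) ℝ :=
  Matrix.of fun a p => Md q r (p.1 : ℕ) z a p.2 / (Nat.factorial (p.1 : ℕ) : ℝ)

/-- `𝓜^0(z) = (M(z), M'(z), …, M^{(ν−1)}(z)) ∈ ℝ^{q×νr}`. -/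
def M0cal (q r ν : ℕ) (z : ℝ) : Matrix (Fin q) (Fin ν × Fin r) ℝ :=
  Matrix.of fun a p => Md q r (p.1 : ℕ) z a p.2

/-- `U_q(z)` with columns `u(z), u'(z), …, u^{(q−1)}(z)`, where `u_a(z) = z^a`. -/
def Uq (q : ℕ) (z : ℝ) : Matrix (Fin q) (Fin q) ℝ :=
  Matrix.of fun a j => iteratedDeriv (j : ℕ) (fun t : ℝ => t ^ (a : ℕ)) z

/-- `W_r(z)` with rows `w(z), w'(z), …, w^{(r−1)}(z)`, where `w_b(z) = z^b`. -/
def Wrm (r : ℕ) (z : ℝ) : Matrix (Fin r) (Fin r) ℝ :=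
  Matrix.of fun i b => iteratedDeriv (i : ℕ) (fun t : ℝ => t ^ (b : ℕ)) z

/-- `Ũ_m(z)` with entries `C(i,j)·z^{i−j}` for `i ≥ j` and `0` otherwise. -/
def Ut (m : ℕ) (z : ℝ) : Matrix (Fin m) (Fin m) ℝ :=
  Matrix.of fun i j =>
    if (j : ℕ) ≤ (i : ℕ) then (Nat.choose i j : ℝ) * z ^ ((i : ℕ) - (j : ℕ)) else 0

/-- `W̃_m(z)` with entries `C(j,i)·z^{j−i}` for `j ≥ i` and `0` otherwise. -/
def Wt (m : ℕ) (z : ℝ) : Matrix (Fin m) (Fin m) ℝ :=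
  Matrix.of fun i j =>
    if (i : ℕ) ≤ (j : ℕ) then (Nat.choose j i : ℝ) * z ^ ((j : ℕ) - (i : ℕ)) else 0

/-- `D_m`, the diagonal matrix with `(i,i)` entry `i!`. -/
def Dm (m : ℕ) : Matrix (Fin m) (Fin m) ℝ :=
  Matrix.diagonal fun i => (Nat.factorial (i : ℕ) : ℝ)

/-- The block matrix `Â` whose `(i,j)` block has `(k,l)` entry `C(i+j,i)` if `k+l = i+j`, else 0. -/
def Ahat (q r μ ν : ℕ) : Matrix (Fin μ × Fin q) (Fin ν × Fin r) ℝ :=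
  Matrix.of fun p p' =>
    if (p.2 : ℕ) + (p'.2 : ℕ) = (p.1 : ℕ) + (p'.1 : ℕ) then
      (Nat.choose ((p.1 : ℕ) + (p'.1 : ℕ)) (p.1 : ℕ) : ℝ)
    else 0

/-- `F(z) ∈ ℝ^{r×(r−1)}` with `F_{ii} = −z`, `F_{i+1,i} = 1`, else `0`. -/
def Fm (r : ℕ) (z : ℝ) : Matrix (Fin r) (Fin (r - 1)) ℝ :=
  Matrix.of fun a b =>
    if (a : ℕ) = (b : ℕ) then -z else if (a : ℕ) = (b : ℕ) + 1 then 1 else 0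

/-- `F'(z)`, the (constant) derivative of `F(z)`: `−1` on the diagonal, `0` elsewhere. -/
def Fm' (r : ℕ) : Matrix (Fin r) (Fin (r - 1)) ℝ :=
  Matrix.of fun a b => if (a : ℕ) = (b : ℕ) then -1 else 0

/-- `G(z) ∈ ℝ^{r×r}` with entries `z^{j−i−1}` for `j > i`, else `0`. -/
def Gm (r : ℕ) (z : ℝ) : Matrix (Fin r) (Fin r) ℝ :=
  Matrix.of fun i j => if (i : ℕ) < (j : ℕ) then z ^ ((j : ℕ) - (i : ℕ) - 1) else 0

/-- entrywise `j`-th derivative `G^{(n)}(z)`. -/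
def Gd (r n : ℕ) (z : ℝ) : Matrix (Fin r) (Fin r) ℝ :=
  Matrix.of fun i j =>
    iteratedDeriv n (fun t : ℝ => if (i : ℕ) < (j : ℕ) then t ^ ((j : ℕ) - (i : ℕ) - 1) else 0) z

/-- the row vector `w(z)` with entries `z^b`. -/
def wv (r : ℕ) (z : ℝ) : Fin r → ℝ := fun b => z ^ (b : ℕ)

/-- the `n`-th derivative `w^{(n)}(z)`. -/
def wd (r n : ℕ) (z : ℝ) : Fin r → ℝ := fun b => iteratedDeriv n (fun t : ℝ => t ^ (b : ℕ)) z

/-- the `n`-th derivative `u^{(n)}(z)` of the column vector `u(z)` with entries `z^a`. -/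
def ud (q n : ℕ) (z : ℝ) : Fin q → ℝ := fun a => iteratedDeriv n (fun t : ℝ => t ^ (a : ℕ)) z

/-- The matrix `K̄(z)`:
`[[I_q⊗F(z) + S_q⊗F'(z), −ℓ_q fᵀ ⊗ G(z)], [0, I_{ν−q}⊗I_r − S_{ν−q}⊗G(z)]]`. -/
def Kbar (q r ν : ℕ) (z : ℝ) :
    Matrix (Fin ν × Fin r) ((Fin q × Fin (r - 1)) ⊕ (Fin (ν - q) × Fin r)) ℝ :=
  Matrix.of fun p s =>
    match s with
    | Sum.inl c =>
        (if (p.1 : ℕ) = (c.1 : ℕ) then Fm r z p.2 c.2 else 0) +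
        (if (p.1 : ℕ) + 1 = (c.1 : ℕ) then Fm' r p.2 c.2 else 0)
    | Sum.inr c =>
        (if (p.1 : ℕ) = q + (c.1 : ℕ) then (if p.2 = c.2 then 1 else 0) else 0) +
        (if (p.1 : ℕ) + 1 = q + (c.1 : ℕ) then -(Gm r z p.2 c.2) else 0)

/-- `F_k(z) ∈ ℝ^{(r−k)×(r−1−k)}`. -/
def Fmk (r k : ℕ) (z : ℝ) : Matrix (Fin (r - k)) (Fin (r - (k + 1))) ℝ :=
  Matrix.of fun a b =>
    if (a : ℕ) = (b : ℕ) then -z else if (a : ℕ) = (b : ℕ) + 1 then 1 else 0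

/-- `F_k'(z)`, the (constant) derivative of `F_k(z)`. -/
def Fmk' (r k : ℕ) : Matrix (Fin (r - k)) (Fin (r - (k + 1))) ℝ :=
  Matrix.of fun a b => if (a : ℕ) = (b : ℕ) then -1 else 0

/-- `K_k(z) = I_ν ⊗ F_k(z) + S_ν ⊗ F_k'(z)`. -/
def Kk (ν r k : ℕ) (z : ℝ) :
    Matrix (Fin ν × Fin (r - k)) (Fin ν × Fin (r - (k + 1))) ℝ :=
  (1 : Matrix (Fin ν) (Fin ν) ℝ) ⊗ₖ Fmk r k z + Sh ν ⊗ₖ Fmk' r k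

/-- `KP ν r z m = K_0(z) · K_1(z) ⋯ K_{m−1}(z)` (so `KP ν r z μ = 𝒦^{μ−1}(z)`). -/
def KP (ν r : ℕ) (z : ℝ) : (m : ℕ) → Matrix (Fin ν × Fin r) (Fin ν × Fin (r - m)) ℝ
  | 0 => Matrix.of fun p p' => if p.1 = p'.1 ∧ (p.2 : ℕ) = (p'.2 : ℕ) then 1 else 0
  | m + 1 => KP ν r z m * Kk ν r m z

/-- `𝒜^0 = (A^0, A^1, …, A^{ν−1}) ∈ ℝ^{q×νr}` (at `z = 0`). -/
def A0row (q r ν : ℕ) : Matrix (Fin q) (Fin ν × Fin r) ℝ :=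
  Matrix.of fun a p =>
    if (a : ℕ) + (p.2 : ℕ) = (p.1 : ℕ) then (Nat.choose (p.1 : ℕ) (a : ℕ) : ℝ) else 0

/-- `B^k ∈ ℝ^{r×q}` with entries `(−1)^i·C(q,k+1)` if `i+j = k`, else `0`. -/
def Bk (q r k : ℕ) : Matrix (Fin r) (Fin q) ℝ :=
  Matrix.of fun i j =>
    if (i : ℕ) + (j : ℕ) = k then (-1 : ℝ) ^ (i : ℕ) * (Nat.choose q (k + 1) : ℝ) else 0

/-- `𝓑^0 ∈ ℝ^{νr×q}`, the blocks `B^0, …, B^{ν−1}` stacked vertically. -/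
def B0cal (q r ν : ℕ) : Matrix (Fin ν × Fin r) (Fin q) ℝ :=
  Matrix.of fun p j => Bk q r (p.1 : ℕ) p.2 j

/-- Left multiplication by a fixed matrix, as a linear map. -/
def mulLeftLM {m n p : Type*} [Fintype n] (M : Matrix m n ℝ) :
    Matrix n p ℝ →ₗ[ℝ] Matrix m p ℝ where
  toFun X := M * X
  map_add' X Y := Matrix.mul_add M X Y
  map_smul' c X := by simp [Matrix.mul_smul]

/-- The right inverse `𝓜(z)⁺`. -/
def Mplus (q r μ ν : ℕ) (z : ℝ) : Matrix (Fin ν × Fin r) (Fin μ × Fin q) ℝ :=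
  ((1 : Matrix (Fin ν) (Fin ν) ℝ) ⊗ₖ (Wrm r z)⁻¹) * (Lmat ν r 0)⁻¹ *
    (Abar q r μ ν)ᵀ * (Lmat μ q 0)⁻¹ * ((1 : Matrix (Fin μ) (Fin μ) ℝ) ⊗ₖ (Uq q z)⁻¹)

lemma binomial_expansion_of_rec {m n : Type*} [Fintype m] [Fintype n] [DecidableEq m]
    [DecidableEq n] (P : Matrix m m ℝ) (Q : Matrix n n ℝ) (B : ℕ → Matrix m n ℝ)
    (hB : ∀ k, B (k + 1) = P * B k + B k * Q) (i k : ℕ) :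
    B (i + k) = ∑ s ∈ Finset.range (i + 1), (i.choose s : ℝ) • (P ^ (i - s) * B k * Q ^ s) := by
  let L : Module.End ℝ (Matrix m n ℝ) :=
    { toFun := fun X => P * X
      map_add' := fun X Y => Matrix.mul_add P X Y
      map_smul' := fun c X => by simp }
  let R : Module.End ℝ (Matrix m n ℝ) :=
    { toFun := fun X => X * Q
      map_add' := fun X Y => Matrix.add_mul X Y Q
      map_smul' := fun c X => by simp }
  have hL : ∀ (e : ℕ) X, (L ^ e) X = P ^ e * X := by
    intro e
    induction e with
    | zero => simp
    | succ e ih =>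
      intro X
      rw [pow_succ', Module.End.mul_apply, ih, pow_succ', Matrix.mul_assoc]
      rfl
  have hR : ∀ (e : ℕ) X, (R ^ e) X = X * Q ^ e := by
    intro e
    induction e with
    | zero => simp
    | succ e ih =>
      intro X
      rw [pow_succ', Module.End.mul_apply, ih, pow_succ, ← Matrix.mul_assoc]
      rfl
  have hcomm : Commute R L := LinearMap.ext fun X => Matrix.mul_assoc P X Q
  have hpow : ∀ e, B (e + k) = ((R + L) ^ e) (B k) := by
    intro e
    induction e with
    | zero => simp
    | succ e ih =>
      rw [pow_succ', Module.End.mul_apply, ← ih, add_right_comm, hB, add_comm]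
      rfl
  rw [hpow, hcomm.add_pow, LinearMap.sum_apply]
  refine Finset.sum_congr rfl fun s _ => ?_
  rw [← nsmul_eq_mul', LinearMap.smul_apply, Module.End.mul_apply, hL, hR,
    Nat.cast_smul_eq_nsmul]

lemma sum_fin_ite_choose (n i : ℕ) (hi : i < n) (f : ℕ → ℝ) :
    ∑ s : Fin n, (if (s : ℕ) ≤ i then (i.choose s : ℝ) * f s else 0) =
      ∑ s ∈ Finset.range (i + 1), (i.choose s : ℝ) * f s := by
  rw [Fin.sum_univ_eq_sum_range (fun s => if s ≤ i then (i.choose s : ℝ) * f s else 0) n,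
    ← Finset.sum_filter]
  refine Finset.sum_congr ?_ fun _ _ => rfl
  ext s
  simp only [Finset.mem_filter, Finset.mem_range]
  omega

lemma shift_transpose_mul_apply {q r : ℕ} (g : ℕ → ℕ → ℝ) (a : Fin q) (b : Fin r) :
    ((Sh q)ᵀ * Matrix.of fun (i : Fin q) (j : Fin r) => g i j) a b =
      if (a : ℕ) = 0 then 0 else g (a - 1) b := by
  simp only [Matrix.mul_apply, Sh, Matrix.transpose_apply, Matrix.of_apply, ite_mul, one_mul,
    zero_mul]
  split_ifs with h
  · exact Finset.sum_eq_zero fun x _ => if_neg (by omega)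
  · rw [Finset.sum_eq_single (⟨a - 1, by omega⟩ : Fin q)]
    · rw [if_pos (by simp only; omega)]
    · intro x _ hx
      refine if_neg fun h' => hx (Fin.ext ?_)
      simp only
      omega
    · simp

lemma mul_shift_apply {q r : ℕ} (g : ℕ → ℕ → ℝ) (a : Fin q) (b : Fin r) :
    ((Matrix.of fun (i : Fin q) (j : Fin r) => g i j) * Sh r) a b =
      if (b : ℕ) = 0 then 0 else g a (b - 1) := by
  rw [← shift_transpose_mul_apply (fun j i => g i j) b a,
    ← Matrix.transpose_apply (Matrix.of _ * Sh r) b a, Matrix.transpose_mul]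
  rfl

lemma trinomial_pascal (z : ℝ) (k a b : ℕ) :
    ((k + 1).choose a : ℝ) * ((k + 1 - a).choose b : ℝ) * z ^ (k + 1 - a - b) =
      z * ((k.choose a : ℝ) * ((k - a).choose b : ℝ) * z ^ (k - a - b)) +
      (if a = 0 then 0 else
        (k.choose (a - 1) : ℝ) * ((k - (a - 1)).choose b : ℝ) * z ^ (k - (a - 1) - b)) +
      (if b = 0 then 0 else
        (k.choose a : ℝ) * ((k - a).choose (b - 1) : ℝ) * z ^ (k - a - (b - 1))) := by
  have pascal : ∀ m c : ℕ, ((m + 1).choose c : ℝ) * z ^ (m + 1 - c) =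
      z * ((m.choose c : ℝ) * z ^ (m - c)) +
        if c = 0 then 0 else (m.choose (c - 1) : ℝ) * z ^ (m - (c - 1)) := by
    intro m c
    rcases c with _ | c
    · simp [pow_succ']
    · rw [if_neg c.succ_ne_zero, Nat.choose_succ_succ]
      rcases Nat.lt_or_ge c m with h | h
      · obtain ⟨d, rfl⟩ := Nat.exists_eq_add_of_lt h
        rw [show c + d + 1 + 1 - (c + 1) = d + 1 by omega,
          show c + d + 1 - (c + 1) = d by omega,
          show c + d + 1 - (c + 1 - 1) = d + 1 by omega]
        push_cast
        ring
      · rw [Nat.choose_eq_zero_of_lt (show m < c.succ by omega)]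
        simp
  rcases Nat.lt_or_ge k a with h | h
  · rw [Nat.choose_eq_zero_of_lt h]
    obtain ⟨a, rfl⟩ : ∃ a', a = a' + 1 := ⟨a - 1, by omega⟩
    rcases Nat.lt_or_ge k a with h' | h'
    · simp [Nat.choose_eq_zero_of_lt h', Nat.choose_eq_zero_of_lt (show k + 1 < a + 1 by omega)]
    · obtain rfl : k = a := by omega
      simp
  · obtain ⟨m, rfl⟩ := Nat.exists_eq_add_of_le h
    have h₁ := pascal m b
    rw [show a + m + 1 - a = m + 1 by omega, show a + m - a = m by omega]
    rcases a with _ | a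
    · simpa using h₁
    · rw [if_neg a.succ_ne_zero, show a + 1 + m - (a + 1 - 1) = m + 1 by omega,
        Nat.choose_succ_succ, Nat.add_sub_cancel]
      push_cast
      have e : (if b = 0 then 0 else ((a + 1 + m).choose (a + 1) : ℝ) *
          (m.choose (b - 1) : ℝ) * z ^ (m - (b - 1))) = ((a + 1 + m).choose (a + 1) : ℝ) *
          (if b = 0 then 0 else (m.choose (b - 1) : ℝ) * z ^ (m - (b - 1))) := by
        split_ifs <;> ring
      rw [e]
      linear_combination ((a + 1 + m).choose (a + 1) : ℝ) * h₁

lemma Amat_eq_of (q r k : ℕ) (z : ℝ) : Amat q r k z = Matrix.of fun (i : Fin q) (j : Fin r) =>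
    (fun a b : ℕ => (k.choose a : ℝ) * ((k - a).choose b : ℝ) * z ^ (k - a - b)) i j := by
  ext i j
  simp only [Amat, Matrix.of_apply]
  split_ifs with h
  · rfl
  · rcases Nat.lt_or_ge k i with h' | h'
    · simp [Nat.choose_eq_zero_of_lt h']
    · simp [Nat.choose_eq_zero_of_lt (show k - i < (j : ℕ) by omega)]

lemma Amat_succ (q r k : ℕ) (z : ℝ) :
    Amat q r (k + 1) z = Jmat q z * Amat q r k z + Amat q r k z * Sh r := by
  rw [Jmat, Matrix.add_mul, Matrix.smul_mul, Matrix.one_mul]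
  simp only [Amat_eq_of]
  ext a b
  let g : ℕ → ℕ → ℝ := fun a b => (k.choose a : ℝ) * ((k - a).choose b : ℝ) * z ^ (k - a - b)
  rw [Matrix.add_apply, Matrix.add_apply, shift_transpose_mul_apply g a b, mul_shift_apply g a b]
  exact trinomial_pascal z k a b

lemma Amat_zero (q r : ℕ) (z : ℝ) : Amat q r 0 z = A0 q r := by
  ext a b
  simp only [Amat, A0, Matrix.of_apply, Nat.le_zero, Nat.add_eq_zero_iff]
  split_ifs with h
  · simp [h.1, h.2]
  · rfl

lemma Jmat_transpose (k : ℕ) (z : ℝ) : (Jmat k z)ᵀ = z • 1 + Sh k := by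
  simp [Jmat]

/-- Mixed intermediate factor, with `(s,j)` block `A^j(z) · S_r^s`. -/
def AmatShift (q r μ ν : ℕ) (z : ℝ) : Matrix (Fin μ × Fin q) (Fin ν × Fin r) ℝ :=
  Matrix.of fun p p' => (Amat q r p'.1 z * Sh r ^ (p.1 : ℕ)) p.2 p'.2

lemma Acal_eq_Lmat_mul (q r μ ν : ℕ) (z : ℝ) :
    Acal q r μ ν z = Lmat μ q z * AmatShift q r μ ν z := by
  ext ⟨i, a⟩ ⟨j, b⟩
  have h := congrFun (congrFun (binomial_expansion_of_rec (Jmat q z) (Sh r)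
    (fun k => Amat q r k z) (fun k => Amat_succ q r k z) i j) a) b
  simp only [Acal, Matrix.of_apply]
  rw [h, Matrix.sum_apply]
  simp only [Matrix.smul_apply, smul_eq_mul]
  rw [← sum_fin_ite_choose μ i i.2
    (fun s => (Jmat q z ^ ((i : ℕ) - s) * Amat q r j z * Sh r ^ s) a b),
    Matrix.mul_apply, Fintype.sum_prod_type]
  refine Finset.sum_congr rfl fun s _ => ?_
  simp only [Lmat, AmatShift, Matrix.of_apply]
  split_ifs
  · rw [Matrix.mul_assoc, Matrix.mul_apply, Finset.mul_sum]
    exact Finset.sum_congr rfl fun c _ => (mul_assoc _ _ _).symm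
  · simp

lemma AmatShift_eq_mul (q r μ ν : ℕ) (z : ℝ) :
    AmatShift q r μ ν z = Abar q r μ ν * (Lmat ν r z)ᵀ := by
  ext ⟨s, c⟩ ⟨j, b⟩
  have hrec : ∀ k, (Amat q r (k + 1) z * Sh r ^ (s : ℕ))ᵀ =
      Jmat r z * (Amat q r k z * Sh r ^ (s : ℕ))ᵀ +
        (Amat q r k z * Sh r ^ (s : ℕ))ᵀ * Sh q := by
    intro k
    apply Matrix.transpose_injective
    simp only [Matrix.transpose_add, Matrix.transpose_mul, Matrix.transpose_transpose,
      Jmat_transpose]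
    rw [Amat_succ, Jmat]
    simp only [Matrix.add_mul, Matrix.mul_add, Matrix.smul_mul, Matrix.mul_smul, Matrix.one_mul,
      Matrix.mul_one, Matrix.mul_assoc, ← pow_succ, ← pow_succ']
    abel
  have h := congrFun (congrFun (binomial_expansion_of_rec (Jmat r z) (Sh q)
    (fun k => (Amat q r k z * Sh r ^ (s : ℕ))ᵀ) hrec j 0) b) c
  simp only [Matrix.transpose_apply, add_zero] at h
  simp only [AmatShift, Matrix.of_apply]
  rw [h, Matrix.sum_apply]
  simp only [Matrix.smul_apply, smul_eq_mul, Amat_zero]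
  rw [← sum_fin_ite_choose ν j j.2
    (fun t => (Jmat r z ^ ((j : ℕ) - t) * (A0 q r * Sh r ^ (s : ℕ))ᵀ * Sh q ^ t) b c),
    Matrix.mul_apply, Fintype.sum_prod_type]
  refine Finset.sum_congr rfl fun t _ => ?_
  simp only [Lmat, Abar, Matrix.of_apply, Matrix.transpose_apply]
  split_ifs
  · rw [Matrix.mul_assoc, Matrix.mul_apply, Finset.mul_sum]
    refine Finset.sum_congr rfl fun d _ => ?_
    have e : ((A0 q r * Sh r ^ (s : ℕ))ᵀ * Sh q ^ (t : ℕ)) d c =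
        ((Sh q)ᵀ ^ (t : ℕ) * A0 q r * Sh r ^ (s : ℕ)) c d := by
      rw [← Matrix.transpose_apply (_ * _) c d, Matrix.transpose_mul, Matrix.transpose_transpose,
        Matrix.transpose_pow, Matrix.mul_assoc]
    rw [e]
    ring
  · simp

lemma Acal_factorization (q r μ ν : ℕ) (z : ℝ) :
    Acal q r μ ν z = Lmat μ q z * (Abar q r μ ν * (Lmat ν r z)ᵀ) := by
  rw [Acal_eq_Lmat_mul, AmatShift_eq_mul]

lemma det_Lmat (m k : ℕ) (z : ℝ) : (Lmat m k z).det = 1 := by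
  have h : (Lmat m k z)ᵀ.BlockTriangular Prod.fst := by
    rintro ⟨i, a⟩ ⟨j, b⟩ hij
    exact if_neg (not_le.2 hij)
  rw [← Matrix.det_transpose, h.det_fintype]
  refine Finset.prod_eq_one fun i _ => ?_
  have : (Lmat m k z)ᵀ.toSquareBlock Prod.fst i = 1 := by
    ext ⟨⟨i₁, a⟩, h₁⟩ ⟨⟨i₂, b⟩, h₂⟩
    obtain rfl : i₁ = i := h₁
    obtain rfl : i₂ = i₁ := h₂
    simp [Lmat, Matrix.toSquareBlock, Matrix.toSquareBlockProp, Matrix.one_apply, eq_comm]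
  rw [this, Matrix.det_one]

lemma Abar_apply (q r μ ν : ℕ) (p : Fin μ × Fin q) (p' : Fin ν × Fin r) :
    Abar q r μ ν p p' = if (p.2 : ℕ) = p'.1 ∧ (p'.2 : ℕ) = p.1 then 1 else 0 := by
  have hleft : ∀ t, (Sh q)ᵀ ^ t * A0 q r = Matrix.of fun (i : Fin q) (j : Fin r) =>
      (fun a b : ℕ => if a = t ∧ b = 0 then (1 : ℝ) else 0) i j := by
    intro t
    induction t with
    | zero => simp [A0]
    | succ t ih =>
      ext a b
      rw [pow_succ', Matrix.mul_assoc, ih, shift_transpose_mul_apply (fun a b : ℕ =>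
        if a = t ∧ b = 0 then (1 : ℝ) else 0) a b]
      simp only [Matrix.of_apply]
      split_ifs <;> first | rfl | omega
  have hright : ∀ t s, (Sh q)ᵀ ^ t * A0 q r * Sh r ^ s =
      Matrix.of fun (i : Fin q) (j : Fin r) =>
        (fun a b : ℕ => if a = t ∧ b = s then (1 : ℝ) else 0) i j := by
    intro t s
    induction s with
    | zero => rw [pow_zero, Matrix.mul_one, hleft]
    | succ s ih =>
      ext a b
      rw [pow_succ, ← Matrix.mul_assoc, ih, mul_shift_apply (fun a b : ℕ =>
        if a = t ∧ b = s then (1 : ℝ) else 0) a b]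
      simp only [Matrix.of_apply]
      split_ifs <;> first | rfl | omega
  rw [Abar, Matrix.of_apply, hright]
  rfl

lemma rank_Abar (q r μ ν : ℕ) : (Abar q r μ ν).rank = min μ r * min ν q := by
  let v : Fin (min μ r) × Fin (min ν q) → (Fin μ × Fin q → ℝ) := fun x =>
    Pi.single (Fin.castLE (min_le_left _ _) x.1, Fin.castLE (min_le_right _ _) x.2) 1
  have hv : LinearIndependent ℝ v := by
    refine (Pi.linearIndependent_single_one (Fin μ × Fin q) ℝ).comp
      (fun x : Fin (min μ r) × Fin (min ν q) =>
        (Fin.castLE (min_le_left _ _) x.1, Fin.castLE (min_le_right _ _) x.2)) ?_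
    rintro ⟨i, a⟩ ⟨j, b⟩ h
    simpa [Fin.ext_iff] using h
  have hspan : Submodule.span ℝ (Set.range (Abar q r μ ν).col) =
      Submodule.span ℝ (Set.range v) := by
    apply le_antisymm <;> rw [Submodule.span_le]
    · rintro _ ⟨⟨j, b⟩, rfl⟩
      by_cases h : (b : ℕ) < μ ∧ (j : ℕ) < q
      · refine Submodule.subset_span ⟨(⟨b, by omega⟩, ⟨j, by omega⟩), ?_⟩
        ext ⟨i, a⟩
        simp only [v, Matrix.col_apply, Abar_apply, Pi.single_apply, Prod.mk.injEq, Fin.ext_iff,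
          Fin.val_castLE]
        exact if_congr (by omega) rfl rfl
      · have h0 : (Abar q r μ ν).col (j, b) = 0 := by
          ext ⟨i, a⟩
          rw [Matrix.col_apply, Abar_apply]
          exact if_neg (by simp only; omega)
        rw [h0]
        exact Submodule.zero_mem _
    · rintro _ ⟨⟨i, a⟩, rfl⟩
      refine Submodule.subset_span ⟨(⟨a, by omega⟩, ⟨i, by omega⟩), ?_⟩
      ext ⟨i', a'⟩
      simp only [v, Matrix.col_apply, Abar_apply, Pi.single_apply, Prod.mk.injEq, Fin.ext_iff,
        Fin.val_castLE]
      exact if_congr (by omega) rfl rfl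
  rw [Matrix.rank_eq_finrank_span_cols, hspan, finrank_span_eq_card hv]
  simp

lemma finProdFinEquiv_lt_iff {m n : ℕ} (p p' : Fin m × Fin n) :
    finProdFinEquiv p < finProdFinEquiv p' ↔ p.1 < p'.1 ∨ p.1 = p'.1 ∧ p.2 < p'.2 := by
  obtain ⟨i, a⟩ := p
  obtain ⟨j, b⟩ := p'
  simp only [Fin.lt_def, Fin.ext_iff, finProdFinEquiv_apply_val]
  have ha := a.2
  have hb := b.2
  rcases lt_trichotomy (i : ℕ) j with h | h | h
  · have : n * (i + 1) ≤ n * j := Nat.mul_le_mul_left _ h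
    rw [mul_add] at this
    omega
  · rw [h]
    omega
  · have : n * (j + 1) ≤ n * i := Nat.mul_le_mul_left _ h
    rw [mul_add] at this
    omega

lemma prod_prod_ite_lt (n : ℕ) (x : ℤˣ) :
    ∏ a : Fin n, ∏ b : Fin n, (if b < a then x else 1) = x ^ (n * (n - 1) / 2) := by
  have : ∀ a : Fin n, ∏ b : Fin n, (if b < a then x else 1) = x ^ (a : ℕ) := by
    intro a
    rw [← Finset.prod_filter, Finset.prod_const]
    simp [Finset.filter_gt_eq_Iio]
  simp only [this]
  rw [Finset.prod_pow_eq_pow_sum, Fin.sum_univ_eq_sum_range (fun i => i) n, Finset.sum_range_id]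

/-- The permutation of `Fin (r * q)` exchanging row-major and column-major enumeration. -/
def majorSwap (q r : ℕ) : Equiv.Perm (Fin (r * q)) :=
  finProdFinEquiv.symm.trans ((Equiv.prodComm (Fin r) (Fin q)).trans
    (finProdFinEquiv.trans (finCongr (mul_comm q r))))

lemma sign_majorSwap (q r : ℕ) :
    Equiv.Perm.sign (majorSwap q r) = (-1) ^ (q * (q - 1) / 2 * (r * (r - 1) / 2)) := by
  have h₁ : ∀ i : Fin (r * q), ∏ j ∈ Finset.Ioi i,
      (if majorSwap q r i < majorSwap q r j then (1 : ℤˣ) else -1) =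
      ∏ j, if i < j ∧ ¬ majorSwap q r i < majorSwap q r j then (-1 : ℤˣ) else 1 := by
    intro i
    rw [← Finset.filter_lt_eq_Ioi, Finset.prod_filter]
    refine Finset.prod_congr rfl fun j _ => ?_
    split_ifs <;> simp_all
  rw [Equiv.Perm.sign_eq_prod_prod_Ioi, Finset.prod_congr rfl fun i _ => h₁ i,
    ← finProdFinEquiv.prod_comp]
  simp only [← (finProdFinEquiv (m := r) (n := q)).prod_comp]
  have h₂ : ∀ p p' : Fin r × Fin q, (finProdFinEquiv p < finProdFinEquiv p' ∧
      ¬ majorSwap q r (finProdFinEquiv p) < majorSwap q r (finProdFinEquiv p')) ↔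
      p.1 < p'.1 ∧ p'.2 < p.2 := by
    rintro ⟨i, a⟩ ⟨j, b⟩
    have : majorSwap q r (finProdFinEquiv (i, a)) < majorSwap q r (finProdFinEquiv (j, b)) ↔
        finProdFinEquiv (a, i) < finProdFinEquiv (b, j) := by
      simp [majorSwap, Fin.lt_def]
    rw [this, finProdFinEquiv_lt_iff, finProdFinEquiv_lt_iff]
    simp only [Fin.lt_def, Fin.ext_iff]
    omega
  simp only [h₂, Fintype.prod_prod_type]
  have h₃ : ∀ i j : Fin r, ∏ a : Fin q, ∏ b : Fin q,
      (if i < j ∧ b < a then (-1 : ℤˣ) else 1) =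
      if i < j then ∏ a : Fin q, ∏ b : Fin q, (if b < a then (-1 : ℤˣ) else 1) else 1 := by
    intro i j
    split_ifs with h <;> simp [h]
  rw [Finset.prod_congr rfl fun i _ => Finset.prod_comm]
  simp only [h₃]
  rw [Finset.prod_comm, prod_prod_ite_lt, prod_prod_ite_lt, pow_mul]

lemma exponent_eq (q r : ℕ) :
    q * r * (q - 1) * (r - 1) / 4 = q * (q - 1) / 2 * (r * (r - 1) / 2) := by
  obtain ⟨a, ha⟩ := (Nat.even_mul_pred_self q).two_dvd
  obtain ⟨b, hb⟩ := (Nat.even_mul_pred_self r).two_dvd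
  rw [show q * r * (q - 1) * (r - 1) = (q * (q - 1)) * (r * (r - 1)) by ring, ha, hb,
    show 2 * a * (2 * b) = 4 * (a * b) by ring]
  simp

lemma Abar_submatrix_eq_permMatrix (q r : ℕ) :
    (Abar q r r q).submatrix (finProdFinEquiv.symm : Fin (r * q) ≃ Fin r × Fin q)
      ((finCongr (mul_comm r q)).trans finProdFinEquiv.symm) =
      (majorSwap q r).permMatrix ℝ := by
  ext x y
  obtain ⟨⟨i, a⟩, rfl⟩ := finProdFinEquiv.surjective x
  obtain ⟨⟨j, b⟩, rfl⟩ := (finProdFinEquiv.trans (finCongr (mul_comm q r))).surjective y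
  have h : majorSwap q r (finProdFinEquiv (i, a)) =
      (finProdFinEquiv.trans (finCongr (mul_comm q r))) (j, b) ↔
      (a : ℕ) = j ∧ (b : ℕ) = i := by
    have e : majorSwap q r (finProdFinEquiv (i, a)) =
        (finProdFinEquiv.trans (finCongr (mul_comm q r))) (a, i) := by simp [majorSwap]
    rw [e, Equiv.apply_eq_iff_eq, Prod.mk.injEq, Fin.ext_iff, Fin.ext_iff,
      eq_comm (a := (i : ℕ))]
  rw [Matrix.submatrix_apply, Abar_apply, Equiv.Perm.permMatrix, PEquiv.toMatrix_apply]
  simp only [Equiv.toPEquiv_apply, Option.mem_some_iff, h]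
  simp

theorem statement4 (q r μ ν : ℕ) (hq : 0 < q) (hr : 0 < r) (hμ : 0 < μ) (hν : 0 < ν) :
    (∀ z : ℝ, (Acal q r μ ν z).rank = min μ r * min ν q) ∧
    (μ = r → ν = q → ∀ z : ℝ,
      IsUnit ((Acal q r r q z).submatrix (bIdx r q)
        (fun x => bIdx q r (Fin.cast (mul_comm r q) x))) ∧
      ((Acal q r r q z).submatrix (bIdx r q)
        (fun x => bIdx q r (Fin.cast (mul_comm r q) x))).det =
        (-1 : ℝ) ^ (q * r * (q - 1) * (r - 1) / 4)) := by
  have hU : ∀ (m k : ℕ) (z : ℝ), IsUnit (Lmat m k z).det := fun m k z => by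
    rw [det_Lmat]
    exact isUnit_one
  refine ⟨fun z => ?_, ?_⟩
  · rw [Acal_factorization, Matrix.rank_mul_eq_right_of_isUnit_det _ _ (hU _ _ _),
      Matrix.rank_mul_eq_left_of_isUnit_det _ _ (by rw [Matrix.det_transpose]; exact hU _ _ _),
      rank_Abar]
  · intro _ _ z
    have hdet : ((Acal q r r q z).submatrix (bIdx r q)
        (fun x => bIdx q r (Fin.cast (mul_comm r q) x))).det =
        (-1 : ℝ) ^ (q * r * (q - 1) * (r - 1) / 4) := by
      change ((Acal q r r q z).submatrix (finProdFinEquiv.symm : Fin (r * q) ≃ Fin r × Fin q)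
        ((finCongr (mul_comm r q)).trans finProdFinEquiv.symm)).det = _
      rw [Acal_factorization,
        ← Matrix.submatrix_mul_equiv _ _ _ (finProdFinEquiv.symm : Fin (r * q) ≃ Fin r × Fin q) _,
        ← Matrix.submatrix_mul_equiv _ _ _
          ((finCongr (mul_comm r q)).trans finProdFinEquiv.symm) _,
        Matrix.det_mul, Matrix.det_mul, Matrix.det_submatrix_equiv_self,
        Matrix.det_submatrix_equiv_self, Matrix.det_transpose, det_Lmat, det_Lmat,
        Abar_submatrix_eq_permMatrix, Matrix.det_permutation, sign_majorSwap, exponent_eq]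
      simp
    refine ⟨?_, hdet⟩
    rw [Matrix.isUnit_iff_isUnit_det, hdet]
    exact (isUnit_one.neg).pow _
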